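/- arXiv:1410.1468 — 2 statements merged into one kernel-verified Lean document; each statement's English description precedes it below -/
import Mathlib

section
/- Let f : ℝ² → ℝ be smooth and set A = f_x²·f_y, B = −f_x³, C = f_y³, D = −f_x·f_y², so that the lowered difference tensor of ∇ = ∂ + Π is df⊗df⊗df. Then the moment map and curvature one-form of ∇ satisfy K = 6{f, Hs(f)} = 6(f_x·(Hs(f))_y − f_y·(Hs(f))_x), ρ₁ = 12·Hs(f)·f_x − 2·(U(f))_x, and ρ₂ = 12·Hs(f)·f_y − 2·(U(f))_y. In particular, if Hs(f) is constant (i.e. the graph of f is an improper affine sphere, or f is affine), then K ≡ 0 and ∇ is moment flat. -/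
/-!
The cubic form `df ⊗ df ⊗ df` is the cube of a one-form, so the quadratic expressions `AD - BC`,
`A² - BD` and `AC - D²` vanish identically. What is left of `K` and `ρ` is a differential
polynomial in `f`. Smooth functions on the plane form a ring on which `px` and `py` act as
derivations (`px_mul`, `py_mul`) that commute (`px_py`), so each identity becomes a polynomial
identity in the partial derivatives of `f`, which `ring` verifies.
-/

set_option linter.unusedVariables false

noncomputable section

/-- Partial derivative with respect to the first variable. -/
def px (f : ℝ → ℝ → ℝ) : ℝ → ℝ → ℝ := fun x y => deriv (fun s => f s y) x

/-- Partial derivative with respect to the second variable. -/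
def py (f : ℝ → ℝ → ℝ) : ℝ → ℝ → ℝ := fun x y => deriv (fun s => f x s) y

/-- Smoothness on a subset of the plane, for a curried function of two real variables. -/
def SmoothOn2 (f : ℝ → ℝ → ℝ) (U : Set (ℝ × ℝ)) : Prop :=
  ContDiffOn ℝ (⊤ : ℕ∞) (Function.uncurry f) U

/-- Smoothness on the whole plane, for a curried function of two real variables. -/
def Smooth2 (f : ℝ → ℝ → ℝ) : Prop :=
  ContDiff ℝ (⊤ : ℕ∞) (Function.uncurry f)

/-- First component ρ₁ of the curvature one-form ρ = ρ₁dx + ρ₂dy of the symplectic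
connection ∇ = ∂ + Π determined by the functions A, B, C, D in Darboux coordinates. -/
def rho1 (A B C D : ℝ → ℝ → ℝ) : ℝ → ℝ → ℝ := fun x y =>
  (-2) * ((-2) * py (px A) x y - py (py B) x y - px (px D) x y
    + px (fun x' y' => A x' y' * D x' y' - B x' y' * C x' y') x y
    + 3 * py (fun x' y' => A x' y' ^ 2 - B x' y' * D x' y') x y
    + 2 * A x y * px D x y - D x y * px A x y - B x y * px C x y)

/-- Second component ρ₂ of the curvature one-form. -/
def rho2 (A B C D : ℝ → ℝ → ℝ) : ℝ → ℝ → ℝ := fun x y =>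
  (-2) * (2 * py (px D) x y + py (py A) x y + px (px C) x y
    + 3 * px (fun x' y' => A x' y' * C x' y' - D x' y' ^ 2) x y
    - py (fun x' y' => A x' y' * D x' y' - B x' y' * C x' y') x y
    - 2 * D x y * py A x y + A x y * py D x y + C x y * py B x y)

/-- The Cahen–Gutt moment map K(∇) of the symplectic connection ∇ = ∂ + Π. -/
def Kmap (A B C D : ℝ → ℝ → ℝ) : ℝ → ℝ → ℝ := fun x y =>
  3 * py (py (px A)) x y + 3 * py (px (px D)) x y
    + py (py (py B)) x y + px (px (px C)) x y
    - px B x y * py C x y + py B x y * px C x y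
    + 3 * (px A x y * py D x y - py A x y * px D x y)
    + 3 * px (px (fun x' y' => A x' y' * C x' y' - D x' y' ^ 2)) x y
    + 3 * py (py (fun x' y' => B x' y' * D x' y' - A x' y' ^ 2)) x y
    - 3 * py (px (fun x' y' => A x' y' * D x' y' - B x' y' * C x' y')) x y

/-- First component of −H(k), the dx⊗dx⊗dx component of the criticality operator. -/
def E1 (A B C D k : ℝ → ℝ → ℝ) : ℝ → ℝ → ℝ := fun x y =>
  px (px (px k)) x y - 3 * A x y * px (px k) x y - 3 * B x y * py (px k) x y
    + px k x y * py B x y - px B x y * py k x y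

/-- The dy⊗dy⊗dy component of the criticality operator. -/
def E2 (A B C D k : ℝ → ℝ → ℝ) : ℝ → ℝ → ℝ := fun x y =>
  py (py (py k)) x y - 3 * D x y * py (py k) x y - 3 * C x y * py (px k) x y
    + py k x y * px C x y - py C x y * px k x y

/-- The dx⊙dx⊙dy component of the criticality operator. -/
def E3 (A B C D k : ℝ → ℝ → ℝ) : ℝ → ℝ → ℝ := fun x y =>
  py (px (px k)) x y + 2 * D x y * px (px k) x y - B x y * py (py k) x y
    + A x y * py (px k) x y + px A x y * py k x y - py A x y * px k x y

/-- The dx⊙dy⊙dy component of the criticality operator. -/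
def E4 (A B C D k : ℝ → ℝ → ℝ) : ℝ → ℝ → ℝ := fun x y =>
  py (py (px k)) x y + 2 * A x y * py (py k) x y - C x y * px (px k) x y
    + D x y * py (px k) x y + py D x y * px k x y - px D x y * py k x y

/-- ∇ = ∂ + Π is critical symplectic on U: the four components of H(K(∇)) vanish on U. -/
def Critical (A B C D : ℝ → ℝ → ℝ) (U : Set (ℝ × ℝ)) : Prop :=
  ∀ p ∈ U, E1 A B C D (Kmap A B C D) p.1 p.2 = 0 ∧
    E2 A B C D (Kmap A B C D) p.1 p.2 = 0 ∧
    E3 A B C D (Kmap A B C D) p.1 p.2 = 0 ∧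
    E4 A B C D (Kmap A B C D) p.1 p.2 = 0

/-- Ricci component R₁₁. -/
def R11 (A B C D : ℝ → ℝ → ℝ) : ℝ → ℝ → ℝ := fun x y =>
  px A x y + py B x y + 2 * (B x y * D x y - A x y ^ 2)

/-- Ricci component R₂₂. -/
def R22 (A B C D : ℝ → ℝ → ℝ) : ℝ → ℝ → ℝ := fun x y =>
  px C x y + py D x y + 2 * (A x y * C x y - D x y ^ 2)

/-- Ricci component R₁₂ = R₂₁. -/
def R12 (A B C D : ℝ → ℝ → ℝ) : ℝ → ℝ → ℝ := fun x y =>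
  - py A x y - px D x y + A x y * D x y - B x y * C x y

/-- (∇_x Ric)_{xx}, using Γ^x_{xx}=A, Γ^y_{xx}=B, Γ^x_{xy}=−D, Γ^y_{xy}=−A, Γ^x_{yy}=C, Γ^y_{yy}=D. -/
def nxRxx (A B C D : ℝ → ℝ → ℝ) : ℝ → ℝ → ℝ := fun x y =>
  px (R11 A B C D) x y
    - 2 * (A x y * R11 A B C D x y + B x y * R12 A B C D x y)

/-- (∇_y Ric)_{xx}. -/
def nyRxx (A B C D : ℝ → ℝ → ℝ) : ℝ → ℝ → ℝ := fun x y =>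
  py (R11 A B C D) x y
    - 2 * ((-(D x y)) * R11 A B C D x y + (-(A x y)) * R12 A B C D x y)

/-- (∇_x Ric)_{xy}. -/
def nxRxy (A B C D : ℝ → ℝ → ℝ) : ℝ → ℝ → ℝ := fun x y =>
  px (R12 A B C D) x y
    - (A x y * R12 A B C D x y + B x y * R22 A B C D x y)
    - ((-(D x y)) * R11 A B C D x y + (-(A x y)) * R12 A B C D x y)

/-- (∇_y Ric)_{xy}. -/
def nyRxy (A B C D : ℝ → ℝ → ℝ) : ℝ → ℝ → ℝ := fun x y =>
  py (R12 A B C D) x y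
    - ((-(D x y)) * R12 A B C D x y + (-(A x y)) * R22 A B C D x y)
    - (C x y * R11 A B C D x y + D x y * R12 A B C D x y)

/-- (∇_x Ric)_{yy}. -/
def nxRyy (A B C D : ℝ → ℝ → ℝ) : ℝ → ℝ → ℝ := fun x y =>
  px (R22 A B C D) x y
    - 2 * ((-(D x y)) * R12 A B C D x y + (-(A x y)) * R22 A B C D x y)

/-- (∇_y Ric)_{yy}. -/
def nyRyy (A B C D : ℝ → ℝ → ℝ) : ℝ → ℝ → ℝ := fun x y =>
  py (R22 A B C D) x y
    - 2 * (C x y * R12 A B C D x y + D x y * R22 A B C D x y)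

/-- ∇ = ∂ + Π is preferred on U: the symmetrized covariant derivative of Ric vanishes on U. -/
def Preferred (A B C D : ℝ → ℝ → ℝ) (U : Set (ℝ × ℝ)) : Prop :=
  ∀ p ∈ U, nxRxx A B C D p.1 p.2 = 0 ∧
    2 * nxRxy A B C D p.1 p.2 + nyRxx A B C D p.1 p.2 = 0 ∧
    2 * nyRxy A B C D p.1 p.2 + nxRyy A B C D p.1 p.2 = 0 ∧
    nyRyy A B C D p.1 p.2 = 0

/-- The Hessian determinant Hs(f) = f_{xx}f_{yy} − f_{xy}². -/
def Hs (f : ℝ → ℝ → ℝ) : ℝ → ℝ → ℝ := fun x y =>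
  px (px f) x y * py (py f) x y - (py (px f) x y) ^ 2

/-- U(f) = f_x²·f_{yy} − 2f_x·f_y·f_{xy} + f_y²·f_{xx}, the contraction of the adjugate
of the Hessian of f with df⊗df. -/
def Uop (f : ℝ → ℝ → ℝ) : ℝ → ℝ → ℝ := fun x y =>
  (px f x y) ^ 2 * py (py f) x y - 2 * px f x y * py f x y * py (px f) x y
    + (py f x y) ^ 2 * px (px f) x y

/-- A = f_x²·f_y, so that the lowered difference tensor is df⊗df⊗df. -/
def Af (f : ℝ → ℝ → ℝ) : ℝ → ℝ → ℝ := fun x y => (px f x y) ^ 2 * py f x y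

/-- B = −f_x³. -/
def Bf (f : ℝ → ℝ → ℝ) : ℝ → ℝ → ℝ := fun x y => -((px f x y) ^ 3)

/-- C = f_y³. -/
def Cf (f : ℝ → ℝ → ℝ) : ℝ → ℝ → ℝ := fun x y => (py f x y) ^ 3

/-- D = −f_x·f_y². -/
def Df (f : ℝ → ℝ → ℝ) : ℝ → ℝ → ℝ := fun x y => -(px f x y * (py f x y) ^ 2)

theorem Smooth2.slice_x {f : ℝ → ℝ → ℝ} (hf : Smooth2 f) (x y : ℝ) :
    DifferentiableAt ℝ (fun s => f s y) x := by
  have h : Differentiable ℝ (Function.uncurry f) := ContDiff.differentiable hf (by simp)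
  have : Differentiable ℝ (fun s => Function.uncurry f (s, y)) := by fun_prop
  exact this x

theorem Smooth2.slice_y {f : ℝ → ℝ → ℝ} (hf : Smooth2 f) (x y : ℝ) :
    DifferentiableAt ℝ (fun s => f x s) y := by
  have h : Differentiable ℝ (Function.uncurry f) := ContDiff.differentiable hf (by simp)
  have : Differentiable ℝ (fun s => Function.uncurry f (x, s)) := by fun_prop
  exact this y

theorem Smooth2.px_eq {f : ℝ → ℝ → ℝ} (hf : Smooth2 f) (p : ℝ × ℝ) :
    Function.uncurry (px f) p = fderiv ℝ (Function.uncurry f) p (1, 0) := by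
  have h : Differentiable ℝ (Function.uncurry f) := ContDiff.differentiable hf (by simp)
  obtain ⟨x, y⟩ := p
  have h2 : HasDerivAt (fun s : ℝ => (s, y)) ((1 : ℝ), (0 : ℝ)) x :=
    (hasDerivAt_id x).prodMk (hasDerivAt_const x y)
  exact ((h (x, y)).hasFDerivAt.comp_hasDerivAt x h2).deriv

theorem Smooth2.py_eq {f : ℝ → ℝ → ℝ} (hf : Smooth2 f) (p : ℝ × ℝ) :
    Function.uncurry (py f) p = fderiv ℝ (Function.uncurry f) p (0, 1) := by
  have h : Differentiable ℝ (Function.uncurry f) := ContDiff.differentiable hf (by simp)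
  obtain ⟨x, y⟩ := p
  have h2 : HasDerivAt (fun s : ℝ => (x, s)) ((0 : ℝ), (1 : ℝ)) y :=
    (hasDerivAt_const y x).prodMk (hasDerivAt_id y)
  exact ((h (x, y)).hasFDerivAt.comp_hasDerivAt y h2).deriv

theorem Smooth2.px {f : ℝ → ℝ → ℝ} (hf : Smooth2 f) : Smooth2 (px f) := by
  have h : ContDiff ℝ (⊤ : ℕ∞) (fderiv ℝ (Function.uncurry f)) :=
    ContDiff.fderiv_right hf (by simp)
  unfold Smooth2
  rw [funext hf.px_eq]
  exact h.clm_apply contDiff_const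

theorem Smooth2.py {f : ℝ → ℝ → ℝ} (hf : Smooth2 f) : Smooth2 (py f) := by
  have h : ContDiff ℝ (⊤ : ℕ∞) (fderiv ℝ (Function.uncurry f)) :=
    ContDiff.fderiv_right hf (by simp)
  unfold Smooth2
  rw [funext hf.py_eq]
  exact h.clm_apply contDiff_const

/-- Schwarz's theorem: mixed partial derivatives of a smooth function agree. -/
theorem px_py {f : ℝ → ℝ → ℝ} (hf : Smooth2 f) : px (py f) = py (px f) := by
  have h : Differentiable ℝ (fderiv ℝ (Function.uncurry f)) :=
    ContDiff.differentiable (n := (⊤ : ℕ∞)) (ContDiff.fderiv_right hf (by simp)) (by simp)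
  have hs (p : ℝ × ℝ) : IsSymmSndFDerivAt ℝ (Function.uncurry f) p :=
    (ContDiff.contDiffAt hf).isSymmSndFDerivAt
      (by simpa using WithTop.coe_le_coe.2 (le_top : (2 : ℕ∞) ≤ ⊤))
  have key (v w p : ℝ × ℝ) :
      fderiv ℝ (fun q => fderiv ℝ (Function.uncurry f) q v) p w
        = fderiv ℝ (fderiv ℝ (Function.uncurry f)) p w v := by
    rw [fderiv_clm_apply (h p) (by fun_prop)]
    simp
  ext x y
  have e1 := hf.py.px_eq (x, y)
  have e2 := hf.px.py_eq (x, y)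
  rw [funext hf.py_eq, key] at e1
  rw [funext hf.px_eq, key] at e2
  exact e1.trans ((hs (x, y) _ _).trans e2.symm)

theorem Smooth2.add {f g : ℝ → ℝ → ℝ} (hf : Smooth2 f) (hg : Smooth2 g) : Smooth2 (f + g) :=
  ContDiff.add hf hg

theorem Smooth2.sub {f g : ℝ → ℝ → ℝ} (hf : Smooth2 f) (hg : Smooth2 g) : Smooth2 (f - g) :=
  ContDiff.sub hf hg

theorem Smooth2.mul {f g : ℝ → ℝ → ℝ} (hf : Smooth2 f) (hg : Smooth2 g) : Smooth2 (f * g) :=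
  ContDiff.mul hf hg

theorem px_add {f g : ℝ → ℝ → ℝ} (hf : Smooth2 f) (hg : Smooth2 g) :
    px (f + g) = px f + px g := by
  ext x y
  exact deriv_add (hf.slice_x x y) (hg.slice_x x y)

theorem py_add {f g : ℝ → ℝ → ℝ} (hf : Smooth2 f) (hg : Smooth2 g) :
    py (f + g) = py f + py g := by
  ext x y
  exact deriv_add (hf.slice_y x y) (hg.slice_y x y)

theorem px_sub {f g : ℝ → ℝ → ℝ} (hf : Smooth2 f) (hg : Smooth2 g) :
    px (f - g) = px f - px g := by
  ext x y
  exact deriv_sub (hf.slice_x x y) (hg.slice_x x y)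

theorem py_sub {f g : ℝ → ℝ → ℝ} (hf : Smooth2 f) (hg : Smooth2 g) :
    py (f - g) = py f - py g := by
  ext x y
  exact deriv_sub (hf.slice_y x y) (hg.slice_y x y)

theorem px_mul {f g : ℝ → ℝ → ℝ} (hf : Smooth2 f) (hg : Smooth2 g) :
    px (f * g) = px f * g + f * px g := by
  ext x y
  exact deriv_mul (hf.slice_x x y) (hg.slice_x x y)

theorem py_mul {f g : ℝ → ℝ → ℝ} (hf : Smooth2 f) (hg : Smooth2 g) :
    py (f * g) = py f * g + f * py g := by
  ext x y
  exact deriv_mul (hf.slice_y x y) (hg.slice_y x y)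

theorem px_neg (f : ℝ → ℝ → ℝ) : px (-f) = -px f := by
  ext x y
  exact deriv.fun_neg

theorem py_neg (f : ℝ → ℝ → ℝ) : py (-f) = -py f := by
  ext x y
  exact deriv.fun_neg

theorem px_zero : px (fun _ _ => 0) = fun _ _ => 0 := by
  ext x y
  simp [px]

theorem py_zero : py (fun _ _ => 0) = fun _ _ => 0 := by
  ext x y
  simp [py]

theorem Af_eq (f : ℝ → ℝ → ℝ) : Af f = px f * px f * py f := by
  ext x y
  simp only [Af, Pi.mul_apply]
  ring

theorem Bf_eq (f : ℝ → ℝ → ℝ) : Bf f = -(px f * px f * px f) := by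
  ext x y
  simp only [Bf, Pi.mul_apply, Pi.neg_apply]
  ring

theorem Cf_eq (f : ℝ → ℝ → ℝ) : Cf f = py f * py f * py f := by
  ext x y
  simp only [Cf, Pi.mul_apply]
  ring

theorem Df_eq (f : ℝ → ℝ → ℝ) : Df f = -(px f * py f * py f) := by
  ext x y
  simp only [Df, Pi.mul_apply, Pi.neg_apply]
  ring

theorem Hs_eq (f : ℝ → ℝ → ℝ) :
    Hs f = px (px f) * py (py f) - py (px f) * py (px f) := by
  ext x y
  simp only [Hs, Pi.mul_apply, Pi.sub_apply]
  ring

theorem Uop_eq (f : ℝ → ℝ → ℝ) :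
    Uop f = px f * px f * py (py f) - (px f * py f * py (px f) + px f * py f * py (px f))
      + py f * py f * px (px f) := by
  ext x y
  simp only [Uop, Pi.mul_apply, Pi.sub_apply, Pi.add_apply]
  ring

theorem Af_mul_Df_sub (f : ℝ → ℝ → ℝ) :
    (fun x y => Af f x y * Df f x y - Bf f x y * Cf f x y) = fun _ _ => 0 := by
  ext x y
  simp only [Af, Bf, Cf, Df]
  ring

theorem Af_sq_sub (f : ℝ → ℝ → ℝ) :
    (fun x y => Af f x y ^ 2 - Bf f x y * Df f x y) = fun _ _ => 0 := by
  ext x y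
  simp only [Af, Bf, Df]
  ring

theorem Bf_mul_Df_sub (f : ℝ → ℝ → ℝ) :
    (fun x y => Bf f x y * Df f x y - Af f x y ^ 2) = fun _ _ => 0 := by
  ext x y
  simp only [Af, Bf, Df]
  ring

theorem Af_mul_Cf_sub (f : ℝ → ℝ → ℝ) :
    (fun x y => Af f x y * Cf f x y - Df f x y ^ 2) = fun _ _ => 0 := by
  ext x y
  simp only [Af, Cf, Df]
  ring

theorem Kmap_cube (f : ℝ → ℝ → ℝ) (hf : Smooth2 f) (x y : ℝ) :
    Kmap (Af f) (Bf f) (Cf f) (Df f) x y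
      = 6 * (px f x y * py (Hs f) x y - py f x y * px (Hs f) x y) := by
  simp only [Kmap, Af_mul_Df_sub, Bf_mul_Df_sub, Af_mul_Cf_sub, px_zero, py_zero]
  -- Smoothness side goals nest deeper than the default discharge depth.
  simp (maxDischargeDepth := 20) only [Af_eq, Bf_eq, Cf_eq, Df_eq, Hs_eq, px_neg, py_neg, px_add, py_add, px_sub, py_sub,
    px_mul, py_mul, px_py, Smooth2.px, Smooth2.py, Smooth2.add, Smooth2.sub, Smooth2.mul,
    hf, Pi.add_apply, Pi.sub_apply, Pi.mul_apply, Pi.neg_apply]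
  ring

theorem rho1_cube (f : ℝ → ℝ → ℝ) (hf : Smooth2 f) (x y : ℝ) :
    rho1 (Af f) (Bf f) (Cf f) (Df f) x y
      = 12 * Hs f x y * px f x y - 2 * px (Uop f) x y := by
  simp only [rho1, Af_mul_Df_sub, Af_sq_sub, px_zero, py_zero]
  simp (maxDischargeDepth := 20) only [Af_eq, Bf_eq, Cf_eq, Df_eq, Hs_eq, Uop_eq, px_neg, py_neg, px_add, py_add, px_sub,
    py_sub, px_mul, py_mul, px_py, Smooth2.px, Smooth2.py, Smooth2.add, Smooth2.sub, Smooth2.mul,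
    hf, Pi.add_apply, Pi.sub_apply, Pi.mul_apply, Pi.neg_apply]
  ring

theorem rho2_cube (f : ℝ → ℝ → ℝ) (hf : Smooth2 f) (x y : ℝ) :
    rho2 (Af f) (Bf f) (Cf f) (Df f) x y
      = 12 * Hs f x y * py f x y - 2 * py (Uop f) x y := by
  simp only [rho2, Af_mul_Df_sub, Af_mul_Cf_sub, px_zero, py_zero]
  simp (maxDischargeDepth := 20) only [Af_eq, Bf_eq, Cf_eq, Df_eq, Hs_eq, Uop_eq, px_neg, py_neg, px_add, py_add, px_sub,
    py_sub, px_mul, py_mul, px_py, Smooth2.px, Smooth2.py, Smooth2.add, Smooth2.sub, Smooth2.mul,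
    hf, Pi.add_apply, Pi.sub_apply, Pi.mul_apply, Pi.neg_apply]
  ring


/-- for a connection with lowered difference tensor df⊗df⊗df,
K = 6{f, Hs(f)}, ρ₁ = 12·Hs(f)·f_x − 2·(U(f))_x, ρ₂ = 12·Hs(f)·f_y − 2·(U(f))_y;
in particular if Hs(f) is constant then K ≡ 0 and ∇ is moment flat. -/
theorem stmt12 (f : ℝ → ℝ → ℝ) (hf : Smooth2 f) :
    (∀ x y : ℝ,
      Kmap (Af f) (Bf f) (Cf f) (Df f) x y
          = 6 * (px f x y * py (Hs f) x y - py f x y * px (Hs f) x y) ∧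
      rho1 (Af f) (Bf f) (Cf f) (Df f) x y
          = 12 * Hs f x y * px f x y - 2 * px (Uop f) x y ∧
      rho2 (Af f) (Bf f) (Cf f) (Df f) x y
          = 12 * Hs f x y * py f x y - 2 * py (Uop f) x y) ∧
    ((∃ c : ℝ, ∀ x y : ℝ, Hs f x y = c) →
      ∀ x y : ℝ, Kmap (Af f) (Bf f) (Cf f) (Df f) x y = 0) := by
  refine ⟨fun x y => ⟨Kmap_cube f hf x y, rho1_cube f hf x y, rho2_cube f hf x y⟩, ?_⟩
  rintro ⟨c, hc⟩ x y
  have hx : px (Hs f) x y = 0 := by simp [px, hc]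
  have hy : py (Hs f) x y = 0 := by simp [py, hc]
  rw [Kmap_cube f hf, hx, hy]
  ring
end
end

section
/- Let u : ℝ → ℝ be smooth and f(x,y) = xy + u(x), and take A = f_x²·f_y, B = −f_x³, C = f_y³, D = −f_x·f_y² (so the lowered difference tensor of ∇ = ∂ + Π is df⊗df⊗df). Then Hs(f) = −1 and U(f) = x²·u''(x) − 2x(y + u'(x)); consequently the moment map of ∇ vanishes identically, K ≡ 0, while its curvature one-form is ρ = (−8y − 8u'(x) − 2x²u'''(x))dx − 8x·dy, which is not identically zero. Hence ∇ is moment flat but not projectively flat (on a surface a symplectic connection is projectively flat exactly when ρ = 0). -/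
/-!
Put p = f_x = y + u'(x) and q = f_y = x. Since the lowered difference tensor is the cube of the
one-form df = p dx + q dy, the quadratic expressions AD − BC, A² − BD and AC − D² vanish
identically (`Af_mul_Df_sub`, `Af_sq_sub`, `Af_mul_Cf_sub`). What remains of K and ρ is built from
A = p²x, B = −p³, C = x³, D = −px² and their derivatives, which are computed as functions
(the lemmas `px_Af`, …) and combined by polynomial algebra. In ρ the quadratic terms cancel, and
ρ₂ = −8x is nonzero at x = 1.
-/

set_option linter.unusedVariables false

noncomputable section

/-- f(x,y) = xy + u(x), whose graph is a ruled improper affine sphere. -/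
def f13 (u : ℝ → ℝ) : ℝ → ℝ → ℝ := fun x y => x * y + u x

section helpers

theorem px_eq_of_hasDerivAt {f g : ℝ → ℝ → ℝ}
    (h : ∀ x y, HasDerivAt (fun s => f s y) (g x y) x) : px f = g := by
  funext x y
  exact (h x y).deriv

theorem py_eq_of_hasDerivAt {f g : ℝ → ℝ → ℝ}
    (h : ∀ x y, HasDerivAt (fun s => f x s) (g x y) y) : py f = g := by
  funext x y
  exact (h x y).deriv

theorem px_const (c : ℝ) : px (fun _ _ => c) = fun _ _ => 0 :=
  px_eq_of_hasDerivAt fun x _ => hasDerivAt_const x c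

theorem py_const (c : ℝ) : py (fun _ _ => c) = fun _ _ => 0 :=
  py_eq_of_hasDerivAt fun _ y => hasDerivAt_const y c

/-- A function of `x` alone has vanishing `y`-derivative. -/
theorem py_of_fst (g : ℝ → ℝ) : py (fun x _ => g x) = fun _ _ => 0 :=
  py_eq_of_hasDerivAt fun x y => hasDerivAt_const y (g x)

variable {u : ℝ → ℝ}

theorem hasDerivAt_iterate_deriv (hu : ContDiff ℝ (⊤ : ℕ∞) u) (x : ℝ) :
    HasDerivAt u (deriv u x) x ∧ HasDerivAt (deriv u) (deriv (deriv u) x) x ∧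
      HasDerivAt (deriv (deriv u)) (deriv (deriv (deriv u)) x) x := by
  have h1 : ContDiff ℝ (⊤ : ℕ∞) (deriv u) := (contDiff_infty_iff_deriv.1 hu).2
  have h2 : ContDiff ℝ (⊤ : ℕ∞) (deriv (deriv u)) := (contDiff_infty_iff_deriv.1 h1).2
  exact ⟨((contDiff_infty_iff_deriv.1 hu).1 x).hasDerivAt,
    ((contDiff_infty_iff_deriv.1 h1).1 x).hasDerivAt,
    ((contDiff_infty_iff_deriv.1 h2).1 x).hasDerivAt⟩

theorem px_f13 (hu : ContDiff ℝ (⊤ : ℕ∞) u) : px (f13 u) = fun x y => y + deriv u x := by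
  refine px_eq_of_hasDerivAt fun x y => ?_
  simpa [f13] using ((hasDerivAt_id x).mul_const y).fun_add (hasDerivAt_iterate_deriv hu x).1

theorem py_f13 : py (f13 u) = fun x _ => x := by
  refine py_eq_of_hasDerivAt fun x y => ?_
  simpa [f13] using ((hasDerivAt_id y).const_mul x).add_const (u x)

theorem px_px_f13 (hu : ContDiff ℝ (⊤ : ℕ∞) u) :
    px (px (f13 u)) = fun x _ => deriv (deriv u) x := by
  rw [px_f13 hu]
  exact px_eq_of_hasDerivAt fun x y => (hasDerivAt_iterate_deriv hu x).2.1.const_add y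

theorem py_px_f13 (hu : ContDiff ℝ (⊤ : ℕ∞) u) : py (px (f13 u)) = fun _ _ => 1 := by
  rw [px_f13 hu]
  exact py_eq_of_hasDerivAt fun x y => (hasDerivAt_id y).add_const (deriv u x)

theorem Af_f13 (hu : ContDiff ℝ (⊤ : ℕ∞) u) :
    Af (f13 u) = fun x y => (y + deriv u x) ^ 2 * x := by
  funext x y
  simp only [Af, px_f13 hu, py_f13]

theorem Bf_f13 (hu : ContDiff ℝ (⊤ : ℕ∞) u) :
    Bf (f13 u) = fun x y => -(y + deriv u x) ^ 3 := by
  funext x y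
  simp only [Bf, px_f13 hu]

theorem Cf_f13 : Cf (f13 u) = fun x _ => x ^ 3 := by
  funext x y
  simp only [Cf, py_f13]

theorem Df_f13 (hu : ContDiff ℝ (⊤ : ℕ∞) u) :
    Df (f13 u) = fun x y => -((y + deriv u x) * x ^ 2) := by
  funext x y
  simp only [Df, px_f13 hu, py_f13]

/-! Derivatives of `A`. -/

theorem px_Af (hu : ContDiff ℝ (⊤ : ℕ∞) u) : px (Af (f13 u)) = fun x y =>
    2 * (y + deriv u x) * deriv (deriv u) x * x + (y + deriv u x) ^ 2 := by
  rw [Af_f13 hu]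
  refine px_eq_of_hasDerivAt fun x y => ?_
  refine HasDerivAt.congr_deriv ((((hasDerivAt_iterate_deriv hu x).2.1.const_add y).fun_pow 2).fun_mul
    (hasDerivAt_id' x)) ?_
  norm_num

theorem py_Af (hu : ContDiff ℝ (⊤ : ℕ∞) u) : py (Af (f13 u)) = fun x y => 2 * (y + deriv u x) * x := by
  rw [Af_f13 hu]
  refine py_eq_of_hasDerivAt fun x y => ?_
  refine HasDerivAt.congr_deriv ((((hasDerivAt_id' y).add_const (deriv u x)).fun_pow 2).mul_const x) ?_
  norm_num

theorem py_py_Af (hu : ContDiff ℝ (⊤ : ℕ∞) u) : py (py (Af (f13 u))) = fun x _ => 2 * x := by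
  rw [py_Af hu]
  refine py_eq_of_hasDerivAt fun x y => ?_
  refine HasDerivAt.congr_deriv ((((hasDerivAt_id' y).add_const (deriv u x)).const_mul 2).mul_const x) ?_
  norm_num

theorem py_px_Af (hu : ContDiff ℝ (⊤ : ℕ∞) u) : py (px (Af (f13 u))) = fun x y =>
    2 * deriv (deriv u) x * x + 2 * (y + deriv u x) := by
  rw [px_Af hu]
  refine py_eq_of_hasDerivAt fun x y => ?_
  have h := (hasDerivAt_id' y).add_const (deriv u x)
  refine HasDerivAt.congr_deriv ((((h.const_mul 2).mul_const (deriv (deriv u) x)).mul_const x).fun_add (h.fun_pow 2)) ?_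
  norm_num

theorem py_py_px_Af (hu : ContDiff ℝ (⊤ : ℕ∞) u) : py (py (px (Af (f13 u)))) = fun _ _ => 2 := by
  rw [py_px_Af hu]
  refine py_eq_of_hasDerivAt fun x y => ?_
  refine HasDerivAt.congr_deriv ((((hasDerivAt_id' y).add_const (deriv u x)).const_mul 2).const_add
      (2 * deriv (deriv u) x * x)) ?_
  norm_num

/-! Derivatives of `B`. -/

theorem px_Bf (hu : ContDiff ℝ (⊤ : ℕ∞) u) : px (Bf (f13 u)) = fun x y =>
    -(3 * (y + deriv u x) ^ 2 * deriv (deriv u) x) := by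
  rw [Bf_f13 hu]
  refine px_eq_of_hasDerivAt fun x y => ?_
  refine HasDerivAt.congr_deriv ((((hasDerivAt_iterate_deriv hu x).2.1.const_add y).fun_pow 3).fun_neg) ?_
  norm_num

theorem py_Bf (hu : ContDiff ℝ (⊤ : ℕ∞) u) : py (Bf (f13 u)) = fun x y => -(3 * (y + deriv u x) ^ 2) := by
  rw [Bf_f13 hu]
  refine py_eq_of_hasDerivAt fun x y => ?_
  refine HasDerivAt.congr_deriv ((((hasDerivAt_id' y).add_const (deriv u x)).fun_pow 3).fun_neg) ?_
  norm_num

theorem py_py_Bf (hu : ContDiff ℝ (⊤ : ℕ∞) u) : py (py (Bf (f13 u))) = fun x y => -(6 * (y + deriv u x)) := by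
  rw [py_Bf hu]
  refine py_eq_of_hasDerivAt fun x y => ?_
  refine HasDerivAt.congr_deriv (((((hasDerivAt_id' y).add_const (deriv u x)).fun_pow 2).const_mul 3).fun_neg) ?_
  norm_num
  ring

theorem py_py_py_Bf (hu : ContDiff ℝ (⊤ : ℕ∞) u) : py (py (py (Bf (f13 u)))) = fun _ _ => -6 := by
  rw [py_py_Bf hu]
  refine py_eq_of_hasDerivAt fun x y => ?_
  refine HasDerivAt.congr_deriv ((((hasDerivAt_id' y).add_const (deriv u x)).const_mul 6).fun_neg) ?_
  norm_num

/-! Derivatives of `C`. -/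

theorem px_Cf : px (Cf (f13 u)) = fun x _ => 3 * x ^ 2 := by
  rw [Cf_f13]
  refine px_eq_of_hasDerivAt fun x y => ?_
  simpa using hasDerivAt_pow 3 x

theorem py_Cf : py (Cf (f13 u)) = fun _ _ => 0 := by
  rw [Cf_f13]
  exact py_of_fst fun x => x ^ 3

theorem px_px_Cf : px (px (Cf (f13 u))) = fun x _ => 6 * x := by
  rw [px_Cf]
  refine px_eq_of_hasDerivAt fun x y => ?_
  refine HasDerivAt.congr_deriv ((hasDerivAt_pow 2 x).const_mul 3) ?_
  norm_num
  ring

theorem px_px_px_Cf : px (px (px (Cf (f13 u)))) = fun _ _ => 6 := by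
  rw [px_px_Cf]
  refine px_eq_of_hasDerivAt fun x y => ?_
  simpa using (hasDerivAt_id' x).const_mul 6

/-! Derivatives of `D`. -/

theorem px_Df (hu : ContDiff ℝ (⊤ : ℕ∞) u) : px (Df (f13 u)) = fun x y =>
    -(deriv (deriv u) x * x ^ 2 + (y + deriv u x) * (2 * x)) := by
  rw [Df_f13 hu]
  refine px_eq_of_hasDerivAt fun x y => ?_
  refine HasDerivAt.congr_deriv ((((hasDerivAt_iterate_deriv hu x).2.1.const_add y).fun_mul
      (hasDerivAt_pow 2 x)).fun_neg) ?_
  norm_num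

theorem py_Df (hu : ContDiff ℝ (⊤ : ℕ∞) u) : py (Df (f13 u)) = fun x _ => -x ^ 2 := by
  rw [Df_f13 hu]
  refine py_eq_of_hasDerivAt fun x y => ?_
  refine HasDerivAt.congr_deriv ((((hasDerivAt_id' y).add_const (deriv u x)).mul_const (x ^ 2)).fun_neg) ?_
  norm_num

theorem py_px_Df (hu : ContDiff ℝ (⊤ : ℕ∞) u) : py (px (Df (f13 u))) = fun x _ => -(2 * x) := by
  rw [px_Df hu]
  refine py_eq_of_hasDerivAt fun x y => ?_
  refine HasDerivAt.congr_deriv (((((hasDerivAt_id' y).add_const (deriv u x)).mul_const (2 * x)).const_add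
      (deriv (deriv u) x * x ^ 2)).fun_neg) ?_
  norm_num

theorem px_px_Df (hu : ContDiff ℝ (⊤ : ℕ∞) u) : px (px (Df (f13 u))) = fun x y =>
    -(deriv (deriv (deriv u)) x * x ^ 2 + 4 * x * deriv (deriv u) x + 2 * (y + deriv u x)) := by
  rw [px_Df hu]
  refine px_eq_of_hasDerivAt fun x y => ?_
  obtain ⟨-, h1, h2⟩ := hasDerivAt_iterate_deriv hu x
  refine HasDerivAt.congr_deriv (((h2.fun_mul (hasDerivAt_pow 2 x)).fun_add
      ((h1.const_add y).fun_mul ((hasDerivAt_id' x).const_mul 2))).fun_neg) ?_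
  norm_num
  ring

theorem py_px_px_Df (hu : ContDiff ℝ (⊤ : ℕ∞) u) : py (px (px (Df (f13 u)))) = fun _ _ => -2 := by
  rw [px_px_Df hu]
  refine py_eq_of_hasDerivAt fun x y => ?_
  refine HasDerivAt.congr_deriv (((((hasDerivAt_id' y).add_const (deriv u x)).const_mul 2).const_add
      (deriv (deriv (deriv u)) x * x ^ 2 + 4 * x * deriv (deriv u) x)).fun_neg) ?_
  norm_num

/-- The value of `ρ₂`, which also shows that `ρ` does not vanish identically. -/
theorem rho2_f13 (hu : ContDiff ℝ (⊤ : ℕ∞) u) (x y : ℝ) :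
    rho2 (Af (f13 u)) (Bf (f13 u)) (Cf (f13 u)) (Df (f13 u)) x y = -8 * x := by
  simp only [rho2, Af_mul_Df_sub, Af_mul_Cf_sub, px_const, py_const, py_px_Df hu,
    py_py_Af hu, px_px_Cf]
  simp only [py_Af hu, py_Df hu, py_Bf hu]
  simp only [Af_f13 hu, Cf_f13, Df_f13 hu]
  ring

end helpers

/-- for f = xy + u(x) with lowered difference tensor df⊗df⊗df:
Hs(f) = −1, U(f) = x²u'' − 2x(y + u'), K ≡ 0, and
ρ = (−8y − 8u' − 2x²u''')dx − 8x·dy is not identically zero; hence ∇ is moment flat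
but not projectively flat. -/
theorem stmt13 (u : ℝ → ℝ) (hu : ContDiff ℝ (⊤ : ℕ∞) u) :
    (∀ x y : ℝ, Hs (f13 u) x y = -1) ∧
    (∀ x y : ℝ, Uop (f13 u) x y
        = x ^ 2 * deriv (deriv u) x - 2 * x * (y + deriv u x)) ∧
    (∀ x y : ℝ, Kmap (Af (f13 u)) (Bf (f13 u)) (Cf (f13 u)) (Df (f13 u)) x y = 0) ∧
    (∀ x y : ℝ, rho1 (Af (f13 u)) (Bf (f13 u)) (Cf (f13 u)) (Df (f13 u)) x y
        = -8 * y - 8 * deriv u x - 2 * x ^ 2 * iteratedDeriv 3 u x) ∧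
    (∀ x y : ℝ, rho2 (Af (f13 u)) (Bf (f13 u)) (Cf (f13 u)) (Df (f13 u)) x y
        = -8 * x) ∧
    ¬ (∀ x y : ℝ,
        rho1 (Af (f13 u)) (Bf (f13 u)) (Cf (f13 u)) (Df (f13 u)) x y = 0 ∧
        rho2 (Af (f13 u)) (Bf (f13 u)) (Cf (f13 u)) (Df (f13 u)) x y = 0) := by
  refine ⟨fun x y => ?_, fun x y => ?_, fun x y => ?_, fun x y => ?_, rho2_f13 hu, fun h => ?_⟩
  · simp only [Hs, px_px_f13 hu, py_px_f13 hu, py_f13, py_of_fst fun x => x]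
    norm_num
  -- Second and third derivatives are rewritten before lower ones, since `simp` rewrites inside out.
  · simp only [Uop, px_px_f13 hu, py_px_f13 hu]
    simp only [py_f13, px_f13 hu, py_of_fst fun x => x]
    ring
  · simp only [Kmap, Af_mul_Df_sub, Bf_mul_Df_sub, Af_mul_Cf_sub, px_const, py_const,
      py_py_px_Af hu, py_px_px_Df hu, py_py_py_Bf hu, px_px_px_Cf]
    simp only [px_Bf hu, py_Bf hu, px_Cf, py_Cf, px_Af hu, py_Af hu, px_Df hu, py_Df hu]
    ring
  · simp only [rho1, Af_mul_Df_sub, Af_sq_sub, px_const, py_const, py_px_Af hu, py_py_Bf hu,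
      px_px_Df hu]
    simp only [px_Df hu, px_Af hu, px_Cf, iteratedDeriv_succ, iteratedDeriv_zero]
    simp only [Af_f13 hu, Bf_f13 hu, Df_f13 hu]
    ring
  · have h1 := (h 1 0).2
    rw [rho2_f13 hu] at h1
    norm_num at h1
end
end
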